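/- Let R be a commutative ring and F a projective R-module, s ∈ F^∨. The shuffle product maps ⋆: F^{⊗p} ⊗ F^{⊗q} → F^{⊗(p+q)} (with Koszul signs for odd elements) form a chain map K^⊗ ⊗ K^⊗ → K^⊗, where K^⊗ is the complex with terms F^{⊗k} and differential f₁⊗⋯⊗f_k ↦ s(f₁)·f₂⊗⋯⊗f_k. Concretely, for the signed shuffle product one has d(x ⋆ y) = (dx) ⋆ y + (−1)^{|x|} x ⋆ (dy). -/

import Mathlib

noncomputable section

/-- The set of `(p,q)`-shuffles, as permutations of `Fin (p + q)` which are strictly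
increasing on the first `p` and on the last `q` indices. -/
def shuffleSet (p q : ℕ) : Finset (Equiv.Perm (Fin (p + q))) :=
  Finset.univ.filter (fun σ =>
    (∀ i j : Fin p, i < j → σ (Fin.castAdd q i) < σ (Fin.castAdd q j)) ∧
    (∀ i j : Fin q, i < j → σ (Fin.natAdd p i) < σ (Fin.natAdd p j)))

/-- The word `v₁ ⊗ v₂ ⊗ ⋯ ⊗ vₙ`, as an element of degree `n` of the tensor algebra
(whose underlying graded module is `T(V) = Tᶜ(V) = ⊕ₖ V^{⊗k}`). -/
def tensorWord {k V : Type*} [CommRing k] [AddCommGroup V] [Module k V]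
    {n : ℕ} (v : Fin n → V) : TensorAlgebra k V :=
  (List.ofFn fun i => TensorAlgebra.ι k (v i)).prod

def liftPerm {m n : ℕ} (h : m = n) (a : Fin (n + 1)) (e : Equiv.Perm (Fin m)) :
    Equiv.Perm (Fin (n + 1)) :=
  Equiv.Perm.decomposeFin.symm (0, (finCongr h).permCongr e) * Fin.cycleRange a

theorem liftPerm_self {m n : ℕ} (h : m = n) (a : Fin (n + 1)) (e : Equiv.Perm (Fin m)) :
    liftPerm h a e a = 0 := by
  simp [liftPerm]

theorem liftPerm_succAbove {m n : ℕ} (h : m = n) (a : Fin (n + 1)) (e : Equiv.Perm (Fin m))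
    (j : Fin m) : liftPerm h a e (a.succAbove (Fin.cast h j)) = (Fin.cast h (e j)).succ := by
  subst h
  simp [liftPerm]

theorem liftPerm_symm_zero {m n : ℕ} (h : m = n) (a : Fin (n + 1)) (e : Equiv.Perm (Fin m)) :
    (liftPerm h a e).symm 0 = a := by
  rw [Equiv.symm_apply_eq, liftPerm_self]

theorem liftPerm_symm_succ {m n : ℕ} (h : m = n) (a : Fin (n + 1)) (e : Equiv.Perm (Fin m))
    (j : Fin m) : (liftPerm h a e).symm (Fin.cast h j).succ
      = a.succAbove (Fin.cast h (e.symm j)) := by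
  rw [Equiv.symm_apply_eq, liftPerm_succAbove, Equiv.apply_symm_apply]

theorem liftPerm_sign {m n : ℕ} (h : m = n) (a : Fin (n + 1)) (e : Equiv.Perm (Fin m)) :
    Equiv.Perm.sign (liftPerm h a e) = (-1) ^ (a : ℕ) * Equiv.Perm.sign e := by
  subst h
  simp [liftPerm, Fin.sign_cycleRange, mul_comm]

theorem liftPerm_inj {m n : ℕ} (h : m = n) (a : Fin (n + 1)) :
    Function.Injective (liftPerm h a) := by
  intro e e' he
  ext j
  have := congrArg (fun σ => σ (a.succAbove (Fin.cast h j))) he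
  simp only [liftPerm_succAbove] at this
  have := congrArg Fin.val this
  simpa using this

theorem liftPerm_surj {m n : ℕ} (h : m = n) (a : Fin (n + 1)) (σ : Equiv.Perm (Fin (n + 1)))
    (hσ : σ a = 0) : ∃ e, liftPerm h a e = σ := by
  subst h
  obtain ⟨⟨c, e⟩, he⟩ := Equiv.Perm.decomposeFin.symm.surjective (σ * (Fin.cycleRange a)⁻¹)
  have hc : c = 0 := by
    have := congrArg (fun τ => τ 0) he
    simp at this
    rw [this]
    simpa [Equiv.Perm.inv_def] using hσ
  subst hc
  refine ⟨e, ?_⟩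
  have : (finCongr rfl).permCongr e = e := by ext; simp
  rw [liftPerm, this, he]
  simp

theorem tensorWord_cast {k V : Type*} [CommRing k] [AddCommGroup V] [Module k V]
    {m n : ℕ} (h : m = n) (v : Fin n → V) :
    tensorWord (k := k) v = tensorWord (k := k) (fun i : Fin m => v (Fin.cast h i)) := by
  subst h; rfl

theorem hX (p q : ℕ) : p + (q + 1) = p + 1 + q := by omega

theorem idxX_l (p q : ℕ) (i : Fin p) : (Fin.castAdd (q + 1) i.succ : Fin (p + 1 + q + 1)) =
    (0 : Fin (p + 1 + q + 1)).succAbove (Fin.cast (hX p q) (Fin.castAdd (q + 1) i)) := by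
  ext; simp

theorem idxX_r (p q : ℕ) (i : Fin (q + 1)) : (Fin.natAdd (p + 1) i : Fin (p + 1 + q + 1)) =
    (0 : Fin (p + 1 + q + 1)).succAbove (Fin.cast (hX p q) (Fin.natAdd p i)) := by
  ext; simp; omega

def posY (p q : ℕ) : Fin (p + 1 + q + 1) := Fin.natAdd (p + 1) (0 : Fin (q + 1))

theorem idxY_l (p q : ℕ) (i : Fin (p + 1)) : (Fin.castAdd (q + 1) i : Fin (p + 1 + q + 1)) =
    (posY p q).succAbove (Fin.cast rfl (Fin.castAdd q i)) := by
  rw [Fin.succAbove_of_castSucc_lt]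
  · ext; simp
  · simp [posY, Fin.lt_def]; omega

theorem idxY_r (p q : ℕ) (i : Fin q) : (Fin.natAdd (p + 1) i.succ : Fin (p + 1 + q + 1)) =
    (posY p q).succAbove (Fin.cast rfl (Fin.natAdd (p + 1) i)) := by
  rw [Fin.succAbove_of_le_castSucc]
  · ext; simp; omega
  · simp [posY, Fin.le_def]

theorem appX {F : Type*} (p q : ℕ) (x : Fin (p + 1) → F) (y : Fin (q + 1) → F)
    (j : Fin (p + (q + 1))) :
    Fin.append x y ((0 : Fin (p + 1 + q + 1)).succAbove (Fin.cast (hX p q) j)) =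
      Fin.append (fun j => x j.succ) y j := by
  induction j using Fin.addCases with
  | left i => rw [← idxX_l, Fin.append_left, Fin.append_left]
  | right i => rw [← idxX_r, Fin.append_right, Fin.append_right]

theorem appY {F : Type*} (p q : ℕ) (x : Fin (p + 1) → F) (y : Fin (q + 1) → F)
    (j : Fin (p + 1 + q)) :
    Fin.append x y ((posY p q).succAbove (Fin.cast rfl j)) =
      Fin.append x (fun j => y j.succ) j := by
  induction j using Fin.addCases with
  | left i => rw [← idxY_l, Fin.append_left, Fin.append_left]
  | right i => rw [← idxY_r, Fin.append_right, Fin.append_right]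

theorem memX (p q : ℕ) (e : Equiv.Perm (Fin (p + (q + 1)))) :
    liftPerm (hX p q) 0 e ∈ shuffleSet (p + 1) (q + 1) ↔ e ∈ shuffleSet p (q + 1) := by
  have h0 : (Fin.castAdd (q + 1) (0 : Fin (p + 1)) : Fin (p + 1 + q + 1)) = 0 := rfl
  simp only [shuffleSet, Finset.mem_filter, Finset.mem_univ, true_and]
  refine and_congr ?_ ?_
  · rw [Fin.forall_fin_succ]
    simp only [Fin.forall_fin_succ (P := fun j => _ < j → _)]
    simp only [idxX_l, liftPerm_succAbove, h0, liftPerm_self]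
    simp [Fin.succ_lt_succ_iff]
  · simp only [idxX_r, liftPerm_succAbove]
    simp

theorem memY (p q : ℕ) (e : Equiv.Perm (Fin (p + 1 + q))) :
    liftPerm rfl (posY p q) e ∈ shuffleSet (p + 1) (q + 1) ↔ e ∈ shuffleSet (p + 1) q := by
  have h0 : (Fin.natAdd (p + 1) (0 : Fin (q + 1)) : Fin (p + 1 + q + 1)) = posY p q := rfl
  simp only [shuffleSet, Finset.mem_filter, Finset.mem_univ, true_and]
  refine and_congr ?_ ?_
  · simp only [idxY_l, liftPerm_succAbove]
    simp
  · rw [Fin.forall_fin_succ]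
    simp only [Fin.forall_fin_succ (P := fun j => _ < j → _)]
    simp only [idxY_r, liftPerm_succAbove, h0, liftPerm_self]
    simp [Fin.succ_lt_succ_iff]

theorem shuffle_cases (p q : ℕ) (σ : Equiv.Perm (Fin (p + 1 + q + 1)))
    (h : σ ∈ shuffleSet (p + 1) (q + 1)) : σ 0 = 0 ∨ σ (posY p q) = 0 := by
  simp only [shuffleSet, Finset.mem_filter, Finset.mem_univ, true_and] at h
  obtain ⟨h1, h2⟩ := h
  obtain ⟨a, ha⟩ := σ.surjective 0
  have key : ∀ b : Fin (p + 1 + (q + 1)), b = a → σ 0 = 0 ∨ σ (posY p q) = 0 := by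
    intro b
    induction b using Fin.addCases with
    | left i =>
      rintro rfl
      left
      rcases Fin.eq_zero_or_eq_succ i with rfl | ⟨j, rfl⟩
      · exact ha
      · have := h1 0 j.succ (Fin.succ_pos j)
        rw [ha] at this
        exact absurd this (Fin.not_lt_zero _)
    | right i =>
      rintro rfl
      right
      rcases Fin.eq_zero_or_eq_succ i with rfl | ⟨j, rfl⟩
      · exact ha
      · have := h2 0 j.succ (Fin.succ_pos j)
        rw [ha] at this
        exact absurd this (Fin.not_lt_zero _)
  exact key a rfl

theorem shuffle_sum {M : Type*} [AddCommGroup M] (p q : ℕ)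
    (f : Equiv.Perm (Fin (p + 1 + q + 1)) → M) :
    ∑ σ ∈ shuffleSet (p + 1) (q + 1), f σ =
      ∑ e ∈ shuffleSet p (q + 1), f (liftPerm (hX p q) 0 e) +
      ∑ e ∈ shuffleSet (p + 1) q, f (liftPerm rfl (posY p q) e) := by
  refine (Finset.sum_filter_add_sum_filter_not (shuffleSet (p + 1) (q + 1))
    (fun σ : Equiv.Perm (Fin (p + 1 + q + 1)) => σ 0 = 0) f).symm.trans ?_
  congr 1
  · symm
    refine Finset.sum_nbij (liftPerm (hX p q) 0) ?_ ((liftPerm_inj _ _).injOn) ?_ (fun _ _ => rfl)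
    · intro e he
      exact Finset.mem_filter.2 ⟨(memX p q e).2 he, liftPerm_self _ _ _⟩
    · intro σ hσ
      obtain ⟨h1, h2⟩ := Finset.mem_filter.1 hσ
      obtain ⟨e, rfl⟩ := liftPerm_surj (hX p q) 0 σ h2
      exact ⟨e, (memX p q e).1 h1, rfl⟩
  · symm
    refine Finset.sum_nbij (liftPerm rfl (posY p q)) ?_ ((liftPerm_inj _ _).injOn) ?_
      (fun _ _ => rfl)
    · intro e he
      refine Finset.mem_filter.2 ⟨(memY p q e).2 he, ?_⟩
      intro h
      have := (liftPerm rfl (posY p q) e).injective (h.trans (liftPerm_self rfl (posY p q) e).symm)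
      have := congrArg Fin.val this
      simp [posY] at this
    · intro σ hσ
      obtain ⟨h1, h2⟩ := Finset.mem_filter.1 hσ
      obtain ⟨e, rfl⟩ := liftPerm_surj rfl (posY p q) σ ((shuffle_cases p q σ h1).resolve_left h2)
      exact ⟨e, (memY p q e).1 h1, rfl⟩

/-- Let `R` be a commutative ring, `F` a projective `R`-module and
`s ∈ F^∨`.  The signed (Koszul-sign) shuffle product maps
`⋆ : F^{⊗p} ⊗ F^{⊗q} → F^{⊗(p+q)}` form a chain map `K^⊗ ⊗ K^⊗ → K^⊗`, where `K^⊗` is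
the complex with terms `F^{⊗k}` and differential
`d(x₁|⋯|x_k) = s(x₁) • (x₂|⋯|x_k)`.  Concretely, for words `x` of length `p + 1` and
`y` of length `q + 1` (treated as words of odd elements, so that the Koszul sign of a
shuffle `σ` is `sign σ` and `|x| = p + 1`):
`d(x ⋆ y) = (dx) ⋆ y + (-1)^{|x|} x ⋆ (dy)`. -/
theorem shuffle_product_is_chain_map
    (R F : Type*) [CommRing R] [AddCommGroup F] [Module R F]
    [Module.Projective R F] (s : F →ₗ[R] R) :
    ∀ (p q : ℕ) (x : Fin (p + 1) → F) (y : Fin (q + 1) → F),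
      -- `d (x ⋆ y)`
      ∑ σ ∈ shuffleSet (p + 1) (q + 1),
        ((Equiv.Perm.sign σ : ℤ) •
          (s (Fin.append x y (σ.symm ⟨0, by omega⟩)) •
            tensorWord (k := R) (fun i : Fin (p + q + 1) =>
              Fin.append x y (σ.symm (Fin.cast (by omega) i.succ))))) =
      -- `(d x) ⋆ y`
      s (x 0) • (∑ σ ∈ shuffleSet p (q + 1),
          ((Equiv.Perm.sign σ : ℤ) •
            tensorWord (k := R) (fun i => Fin.append (fun j => x j.succ) y (σ.symm i)))) +
      -- `+ (-1)^{|x|} x ⋆ (d y)`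
      ((-1 : ℤ) ^ (p + 1)) •
        (s (y 0) • (∑ σ ∈ shuffleSet (p + 1) q,
          ((Equiv.Perm.sign σ : ℤ) •
            tensorWord (k := R) (fun i => Fin.append x (fun j => y j.succ) (σ.symm i))))) := by
  intro p q x y
  refine (shuffle_sum p q _).trans ?_
  congr 1
  · rw [Finset.smul_sum]
    refine Finset.sum_congr rfl fun e _ => ?_
    rw [smul_comm (s (x 0)), liftPerm_sign]
    have h0 : (liftPerm (hX p q) 0 e).symm ⟨0, by omega⟩ = 0 := liftPerm_symm_zero _ _ _
    have hx : Fin.append x y (0 : Fin (p + 1 + q + 1)) = x 0 :=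
      Fin.append_left x y 0
    rw [h0, hx]
    congr 2
    · simp
    · congr 1
      funext i
      rw [← appX p q x y, ← liftPerm_symm_succ]
      rfl
  · rw [Finset.smul_sum, Finset.smul_sum]
    refine Finset.sum_congr rfl fun e _ => ?_
    rw [smul_comm (s (y 0)), liftPerm_sign, smul_smul]
    have h0 : (liftPerm rfl (posY p q) e).symm ⟨0, by omega⟩ = posY p q :=
      liftPerm_symm_zero _ _ _
    have hy : Fin.append x y (posY p q) = y 0 :=
      Fin.append_right x y 0
    rw [h0, hy]
    refine congrArg₂ (· • ·) ?_ (congrArg (s (y 0) • ·) ?_)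
    · simp [posY]
    · rw [tensorWord_cast (show p + 1 + q = p + q + 1 by omega)]
      congr 1
      funext i
      rw [← appY p q x y, ← liftPerm_symm_succ]
      rfl


end
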